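/- Let ℓ ∈ ℕ and α = ℓ + 1/2, n ∈ ℕ, m = (m₁,…,mₙ) ∈ ℕⁿ with m₁,…,mₙ pairwise distinct, and t = (t₁,…,tₙ) ∈ ℝⁿ. With C^{(α)}_i the classical Gegenbauer polynomials, define ρ_{ij}(z) = ∫_{-1}^{z} C^{(α)}_i(u)·C^{(α)}_j(u)·(1-u²)^{ℓ} du, let R_m(z) be the n×n matrix with entries [R_m(z)]_{kℓ'} = δ_{kℓ'} + t_{ℓ'}·ρ_{m_k m_{ℓ'}}(z), τ_m(z) = det R_m(z), and define C_{m;i}(z) = Σ_{j=1}^{n+1} [adj R_{(m,i)}(z)]_{n+1,j}·C^{(α)}_{μ_j}(z) where μ = (m₁,…,mₙ,i) and R_{(m,i)}(z) is the (n+1)×(n+1) matrix with entries δ_{kℓ'} + s_{ℓ'}·ρ_{μ_k μ_{ℓ'}}(z), s_{ℓ'} = t_{ℓ'} for ℓ' ≤ n and s_{n+1} = 0. Set ν_i = π·2^{1-2α}·Γ(i+2α)/(i!·(i+α)·Γ(α)²). Then: (1) τ_m(z) ≠ 0 for all z ∈ [-1,1] if and only if t_j > -ν_{m_j}⁻¹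 for all j = 1,…,n; and (2) if this condition holds, then for every i ∈ ℕ, ∫_{-1}^{1} C_{m;i}(z)²·(1-z²)^{ℓ}/τ_m(z)² dz = ν_i/(1 + δ_{i,m}·t_{j(i)}·ν_i), where δ_{i,m} = 1 and t_{j(i)} is the parameter with m_{j(i)} = i when i ∈ {m₁,…,mₙ}, and δ_{i,m} = 0 otherwise. -/

import Mathlib

/-- The classical Gegenbauer polynomial
`C^{(α)}_i(z) = ∑_{k=0}^{⌊i/2⌋} (-1)^k Γ(i-k+α)/(Γ(α)k!(i-2k)!) (2z)^{i-2k}`. -/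
noncomputable def gegenC (α : ℝ) (i : ℕ) (z : ℝ) : ℝ :=
  ∑ k ∈ Finset.range (i / 2 + 1),
    (-1 : ℝ) ^ k * Real.Gamma ((i : ℝ) - k + α)
      / (Real.Gamma α * (Nat.factorial k) * (Nat.factorial (i - 2 * k)))
      * (2 * z) ^ (i - 2 * k)

/-- `ρ_{ij}(z) = ∫_{-1}^z C^{(α)}_i C^{(α)}_j (1-u²)^ℓ du`, for `α = ℓ + 1/2`. -/
noncomputable def rhoGegen (ℓ : ℕ) (i j : ℕ) (z : ℝ) : ℝ :=
  ∫ u in (-1 : ℝ)..z,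
    gegenC ((ℓ : ℝ) + 1/2) i u * gegenC ((ℓ : ℝ) + 1/2) j u * (1 - u ^ 2) ^ ℓ

/-- The `n × n` matrix `R_m(z)` with entries `δ_{kl} + t_l ρ_{m_k m_l}(z)`. -/
noncomputable def rMat (ℓ n : ℕ) (m : ℕ → ℕ) (t : ℕ → ℝ) (z : ℝ) :
    Matrix (Fin n) (Fin n) ℝ :=
  Matrix.of fun k l =>
    (if k = l then (1 : ℝ) else 0) + t (l.1 + 1) * rhoGegen ℓ (m (k.1 + 1)) (m (l.1 + 1)) z

/-- The τ-function `τ_m(z) = det R_m(z)`. -/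
noncomputable def tauMat (ℓ n : ℕ) (m : ℕ → ℕ) (t : ℕ → ℝ) (z : ℝ) : ℝ :=
  (rMat ℓ n m t z).det

/-- The exceptional Gegenbauer polynomial of the second kind, via the adjugate of
the bordered matrix `R_{(m,i)}`. -/
noncomputable def xGegenC (ℓ n : ℕ) (m : ℕ → ℕ) (t : ℕ → ℝ) (i : ℕ) (z : ℝ) : ℝ :=
  ∑ j : Fin (n + 1),
    (rMat ℓ (n + 1) (fun a => if a ≤ n then m a else i)
        (fun a => if a ≤ n then t a else 0) z).adjugate (Fin.last n) j
      * gegenC ((ℓ : ℝ) + 1/2) (if j.1 + 1 ≤ n then m (j.1 + 1) else i) z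

/-- The squared norm `ν_i = π 2^{1-2α} Γ(i+2α)/(i!(i+α)Γ(α)²)` of the classical
Gegenbauer polynomial, for `α = ℓ + 1/2`. -/
noncomputable def nuGegen (ℓ : ℕ) (i : ℕ) : ℝ :=
  Real.pi * (2 : ℝ) ^ (1 - 2 * ((ℓ : ℝ) + 1/2)) * Real.Gamma ((i : ℝ) + 2 * ((ℓ : ℝ) + 1/2))
    / ((Nat.factorial i : ℝ) * ((i : ℝ) + ((ℓ : ℝ) + 1/2)) * (Real.Gamma ((ℓ : ℝ) + 1/2)) ^ 2)

/-!
Let `G(z)` be the Gram matrix of a finite family `c` in `L²([a, z], w)`, put `T = diag(t)` and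
`R = 1 + G T`. Since `G' = w c cᵀ` and `1 - T R⁻¹ G = (R⁻¹)ᵀ`, the family `φ = R⁻¹ c` satisfies
`(R⁻¹ G)' = w φ φᵀ`; hence the Gram matrix of `φ` on `[a, b]` is `R⁻¹ G` evaluated at `b`. When `c`
is orthogonal on `[a, b]` with squared norms `ν`, this gives the squared norms `ν / (1 + t ν)` of
`φ`. As they are integrals of squares, `1 + t ν > 0` is necessary for `det R` not to vanish, and it
is sufficient by Bessel's inequality, that is, `0 ≤ G(z) ≤ diag(ν)`.

The exceptional polynomials are covered by adding one more member to the family, with parameter `0`: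
this does not change `det R = τ_m`, and `C_{m;i} / τ_m` is the last component of `φ`.

For the classical polynomials, integrating the differential equation by parts and using
`(C^{(α)}_{i+1})' = 2 α C^{(α+1)}_i` expresses `ρ_{i+1,j+1}(1)` for `α` through `ρ_{ij}(1)` for
`α + 1`, so orthogonality and norms follow together by induction on the degree.
-/

section MatrixLemmas

open Matrix

variable {ι : Type*} [Fintype ι] [DecidableEq ι]

/- This is Bessel's inequality when `G ≤ diagonal d` are the Gram matrices of the truncations of an
orthogonal family and of the family itself. -/
theorem sum_sq_mulVec_div_le_of_posSemidef {𝕜 : Type*} [Field 𝕜] [LinearOrder 𝕜]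
    [IsStrictOrderedRing 𝕜] [StarRing 𝕜] [TrivialStar 𝕜] {G : Matrix ι ι 𝕜} {d : ι → 𝕜}
    (hG : G.PosSemidef) (hdG : (diagonal d - G).PosSemidef) (hd : ∀ k, d k ≠ 0) (v : ι → 𝕜) :
    ∑ k, (G *ᵥ v) k ^ 2 / d k ≤ v ⬝ᵥ G *ᵥ v := by
  set x := G *ᵥ v
  set y : ι → 𝕜 := fun k => x k / d k
  have hsymm : Gᵀ = G := isHermitian_iff_isSymm.1 hG.isHermitian
  have hvy : v ⬝ᵥ G *ᵥ y = y ⬝ᵥ x := by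
    rw [dotProduct_mulVec, ← mulVec_transpose, hsymm, dotProduct_comm]
  have hdy : diagonal d *ᵥ y = x := by
    ext k
    simp [y, mulVec_diagonal, mul_div_cancel₀ _ (hd k)]
  have hG' := hG.dotProduct_mulVec_nonneg (v - y)
  have hdG' := hdG.dotProduct_mulVec_nonneg y
  rw [star_trivial, mulVec_sub, sub_dotProduct, dotProduct_sub, dotProduct_sub, hvy] at hG'
  rw [star_trivial, sub_mulVec, dotProduct_sub, hdy] at hdG'
  calc ∑ k, x k ^ 2 / d k = y ⬝ᵥ x := Finset.sum_congr rfl fun k _ => by ring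
    _ ≤ v ⬝ᵥ x := by linarith

theorem det_one_add_mul_diagonal_ne_zero {𝕜 : Type*} [Field 𝕜] [LinearOrder 𝕜]
    [IsStrictOrderedRing 𝕜] [StarRing 𝕜] [TrivialStar 𝕜] {G : Matrix ι ι 𝕜} {d t : ι → 𝕜}
    (hG : G.PosSemidef) (hdG : (diagonal d - G).PosSemidef) (hd : ∀ k, 0 < d k)
    (ht : ∀ k, 0 < 1 + t k * d k) : (1 + G * diagonal t).det ≠ 0 := by
  intro hdet
  obtain ⟨v, hv, hker⟩ := exists_vecMul_eq_zero_iff.2 hdet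
  set x := G *ᵥ v with hx
  have hsymm : Gᵀ = G := isHermitian_iff_isSymm.1 hG.isHermitian
  have hvx : ∀ k, v k = -(t k * x k) := fun k => by
    rw [vecMul_add, vecMul_one, ← vecMul_vecMul, ← mulVec_transpose G, hsymm, ← hx] at hker
    have := congrFun hker k
    rw [Pi.add_apply, vecMul_diagonal, Pi.zero_apply] at this
    linear_combination this
  have hsum : ∑ k, (1 + t k * d k) / d k * x k ^ 2 ≤ 0 := by
    calc ∑ k, (1 + t k * d k) / d k * x k ^ 2 = ∑ k, x k ^ 2 / d k - v ⬝ᵥ x := by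
          rw [dotProduct, ← Finset.sum_sub_distrib]
          refine Finset.sum_congr rfl fun k _ => ?_
          rw [hvx k]
          have := (hd k).ne'
          field_simp
          ring
      _ ≤ 0 := sub_nonpos.2 (sum_sq_mulVec_div_le_of_posSemidef hG hdG (fun k => (hd k).ne') v)
  have hcoeff : ∀ k, 0 < (1 + t k * d k) / d k := fun k => div_pos (ht k) (hd k)
  have hterm : ∀ k ∈ Finset.univ, 0 ≤ (1 + t k * d k) / d k * x k ^ 2 := fun k _ =>
    mul_nonneg (hcoeff k).le (sq_nonneg _)
  have hzero := (Finset.sum_eq_zero_iff_of_nonneg hterm).1 (hsum.antisymm (Finset.sum_nonneg hterm))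
  have hx0 : ∀ k, x k = 0 := fun k => by
    simpa [(hcoeff k).ne'] using hzero k (Finset.mem_univ k)
  exact hv (funext fun k => by simp [hvx, hx0])

theorem inv_one_add_mul_diagonal_mul_apply_self_mul {R κ : Type*} [CommRing R] [DecidableEq κ]
    {G : Matrix ι ι R} {μ : ι → κ} {ν : κ → R} {t : ι → R}
    (hG : ∀ k l, G k l = if μ k = μ l then ν (μ k) else 0)
    (hdet : IsUnit (1 + G * diagonal t).det) (k : ι) :
    ((1 + G * diagonal t)⁻¹ * G) k k * (1 + (∑ l with μ l = μ k, t l) * ν (μ k)) = ν (μ k) := by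
  set e : ι → R := fun k => 1 + (∑ l with μ l = μ k, t l) * ν (μ k)
  have hmul : (1 + G * diagonal t) * G = G * diagonal e := by
    ext j k
    have hterm : ∀ l, G j l * t l * G l k = G j k * if μ l = μ k then t l * ν (μ k) else 0 := by
      intro l
      by_cases hl : μ l = μ k <;> simp [hG, hl, mul_assoc]
    rw [add_mul, one_mul, Matrix.add_apply, mul_apply]
    simp only [mul_diagonal, hterm, e]
    rw [← Finset.mul_sum, ← Finset.sum_filter, ← Finset.sum_mul, mul_add, mul_one]
  have hcancel : (1 + G * diagonal t)⁻¹ * G * diagonal e = G := by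
    rw [mul_assoc, ← hmul, ← mul_assoc, nonsing_inv_mul _ hdet, one_mul]
  simpa [mul_diagonal, hG, e] using congrFun (congrFun hcancel k) k

theorem det_eq_mul_det_submatrix_castSucc {R : Type*} [CommRing R] {n : ℕ}
    {A : Matrix (Fin (n + 1)) (Fin (n + 1)) R}
    (hA : ∀ k : Fin n, A k.castSucc (Fin.last n) = 0) :
    A.det = A (Fin.last n) (Fin.last n) * (A.submatrix Fin.castSucc Fin.castSucc).det := by
  rw [det_succ_column A (Fin.last n), Fin.sum_univ_castSucc]
  simp [hA, ← two_mul, pow_mul, Fin.succAbove_last]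

end MatrixLemmas

theorem hasDerivAt_ringInverse {𝕜 R : Type*} [NontriviallyNormedField 𝕜] [NormedRing R]
    [NormedAlgebra 𝕜 R] [HasSummableGeomSeries R] {A : 𝕜 → R} {A' : R} {z : 𝕜}
    (hA : HasDerivAt A A' z) (hunit : IsUnit (A z)) :
    HasDerivAt (fun z => Ring.inverse (A z))
      (-(Ring.inverse (A z) * A' * Ring.inverse (A z))) z := by
  obtain ⟨u, hu⟩ := hunit
  have hinv := hasFDerivAt_ringInverse (𝕜 := 𝕜) u
  rw [hu] at hinv
  simpa [← hu, Function.comp_def] using hinv.comp_hasDerivAt z hA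

section ConfluentDarboux

open Matrix

variable {ι : Type*} {w : ℝ → ℝ} {c : ι → ℝ → ℝ}

/-- Gram matrix of the family `c` in `L²([a, z], w)`. -/
noncomputable def gramMatrix (w : ℝ → ℝ) (c : ι → ℝ → ℝ) (a z : ℝ) : Matrix ι ι ℝ :=
  of fun k l => ∫ u in a..z, c k u * c l u * w u

theorem gramMatrix_isSymm (w : ℝ → ℝ) (c : ι → ℝ → ℝ) (a z : ℝ) : (gramMatrix w c a z).IsSymm := by
  ext k l
  simp only [gramMatrix, transpose_apply, of_apply, mul_comm (c l _)]

theorem gramMatrix_self (w : ℝ → ℝ) (c : ι → ℝ → ℝ) (a : ℝ) : gramMatrix w c a a = 0 := by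
  ext k l
  simp [gramMatrix]

theorem gramMatrix_sub (hw : Continuous w) (hc : ∀ k, Continuous (c k)) (a y z : ℝ) :
    gramMatrix w c a z - gramMatrix w c a y = gramMatrix w c y z := by
  ext k l
  have hcont : Continuous fun u => c k u * c l u * w u := ((hc k).mul (hc l)).mul hw
  exact intervalIntegral.integral_interval_sub_left (hcont.intervalIntegrable _ _)
    (hcont.intervalIntegrable _ _)

theorem hasDerivAt_gramMatrix [Finite ι] (hw : Continuous w) (hc : ∀ k, Continuous (c k))
    (a z : ℝ) :
    HasDerivAt (gramMatrix w c a) (w z • vecMulVec (fun k => c k z) fun k => c k z) z := by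
  cases nonempty_fintype ι
  refine hasDerivAt_pi.2 fun k => hasDerivAt_pi.2 fun l => ?_
  have hcont : Continuous fun u => c k u * c l u * w u := ((hc k).mul (hc l)).mul hw
  refine (intervalIntegral.integral_hasDerivAt_right (hcont.intervalIntegrable a z)
    (hcont.stronglyMeasurableAtFilter _ _) hcont.continuousAt).congr_deriv ?_
  simp [vecMulVec_apply, mul_comm]

theorem dotProduct_gramMatrix_mulVec [Fintype ι] (hw : Continuous w)
    (hc : ∀ k, Continuous (c k)) (a b : ℝ) (v : ι → ℝ) :
    v ⬝ᵥ gramMatrix w c a b *ᵥ v = ∫ u in a..b, (∑ k, v k * c k u) ^ 2 * w u := by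
  have hexpand : ∀ u, (∑ k, v k * c k u) ^ 2 * w u =
      ∑ k, v k * ∑ l, c k u * c l u * w u * v l := fun u => by
    rw [sq, Finset.sum_mul_sum, Finset.sum_mul]
    refine Finset.sum_congr rfl fun k _ => ?_
    rw [Finset.sum_mul, Finset.mul_sum]
    exact Finset.sum_congr rfl fun l _ => by ring
  have hint : ∀ k l, IntervalIntegrable (fun u => c k u * c l u * w u * v l)
      MeasureTheory.volume a b := fun k l =>
    ((((hc k).mul (hc l)).mul hw).mul continuous_const).intervalIntegrable a b
  have hint_sum : ∀ k, IntervalIntegrable (fun u => ∑ l, c k u * c l u * w u * v l)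
      MeasureTheory.volume a b := fun k =>
    (continuous_finsetSum _ fun l _ =>
      (((hc k).mul (hc l)).mul hw).mul continuous_const).intervalIntegrable a b
  simp only [hexpand]
  rw [intervalIntegral.integral_finsetSum fun k _ => (hint_sum k).const_mul (v k)]
  refine Finset.sum_congr rfl fun k _ => ?_
  rw [intervalIntegral.integral_const_mul, intervalIntegral.integral_finsetSum fun l _ => hint k l]
  simp only [intervalIntegral.integral_mul_const, mulVec, dotProduct, gramMatrix, of_apply]

theorem posSemidef_gramMatrix [Finite ι] (hw : Continuous w) (hc : ∀ k, Continuous (c k))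
    {a b : ℝ} (hab : a ≤ b) (hpos : ∀ u ∈ Set.Icc a b, 0 ≤ w u) :
    (gramMatrix w c a b).PosSemidef := by
  cases nonempty_fintype ι
  refine .of_dotProduct_mulVec_nonneg (isHermitian_iff_isSymm.2 (gramMatrix_isSymm w c a b))
    fun v => ?_
  rw [star_trivial, dotProduct_gramMatrix_mulVec hw hc]
  exact intervalIntegral.integral_nonneg hab fun u hu => mul_nonneg (sq_nonneg _) (hpos u hu)

variable [Fintype ι] [DecidableEq ι]

/-- The matrix `R = 1 + G diag(t)` of the iterated confluent Darboux transformation of the family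
`c` with parameters `t`, where `G` is the truncated Gram matrix. -/
noncomputable def darbouxMatrix (w : ℝ → ℝ) (c : ι → ℝ → ℝ) (t : ι → ℝ) (a z : ℝ) :
    Matrix ι ι ℝ :=
  1 + gramMatrix w c a z * diagonal t

/-- The family `R⁻¹ c` obtained from `c` by the iterated confluent Darboux transformation. -/
noncomputable def darbouxFamily (w : ℝ → ℝ) (c : ι → ℝ → ℝ) (t : ι → ℝ) (a : ℝ) (k : ι) (z : ℝ) :
    ℝ :=
  ((darbouxMatrix w c t a z)⁻¹ *ᵥ fun l => c l z) k

theorem one_sub_diagonal_mul_inv_mul_gramMatrix {t : ι → ℝ} {a z : ℝ}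
    (hdet : (darbouxMatrix w c t a z).det ≠ 0) :
    1 - diagonal t * ((darbouxMatrix w c t a z)⁻¹ * gramMatrix w c a z) =
      ((darbouxMatrix w c t a z)⁻¹)ᵀ := by
  set R := darbouxMatrix w c t a z with hR
  set G := gramMatrix w c a z
  have htranspose : Rᵀ = 1 + diagonal t * G := by
    simp [hR, darbouxMatrix, (gramMatrix_isSymm w c a z).eq, G]
  have hcomm : G * Rᵀ = R * G := by
    rw [htranspose, hR, darbouxMatrix, mul_add, add_mul, mul_one, one_mul, mul_assoc]
  have hunit : IsUnit R.det := hdet.isUnit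
  rw [transpose_nonsing_inv]
  refine (inv_eq_left_inv ?_).symm
  calc (1 - diagonal t * (R⁻¹ * G)) * Rᵀ
      = Rᵀ - diagonal t * (R⁻¹ * (G * Rᵀ)) := by noncomm_ring
    _ = 1 := by rw [hcomm, nonsing_inv_mul_cancel_left _ _ hunit, htranspose, add_sub_cancel_right]

open scoped Matrix.Norms.Operator in
theorem hasDerivAt_inv_darbouxMatrix (hw : Continuous w) (hc : ∀ k, Continuous (c k)) {t : ι → ℝ}
    {a z : ℝ} (hdet : (darbouxMatrix w c t a z).det ≠ 0) :
    HasDerivAt (fun z => (darbouxMatrix w c t a z)⁻¹)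
      (-((darbouxMatrix w c t a z)⁻¹ *
        ((w z • vecMulVec (fun k => c k z) fun k => c k z) * diagonal t) *
        (darbouxMatrix w c t a z)⁻¹)) z := by
  simp only [nonsing_inv_eq_ringInverse]
  exact hasDerivAt_ringInverse (((hasDerivAt_gramMatrix hw hc a z).mul_const _).const_add 1)
    ((isUnit_iff_isUnit_det _).2 hdet.isUnit)

open scoped Matrix.Norms.Operator in
theorem hasDerivAt_inv_darbouxMatrix_mul_gramMatrix (hw : Continuous w)
    (hc : ∀ k, Continuous (c k)) {t : ι → ℝ} {a z : ℝ}
    (hdet : (darbouxMatrix w c t a z).det ≠ 0) :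
    HasDerivAt (fun z => (darbouxMatrix w c t a z)⁻¹ * gramMatrix w c a z)
      (w z • vecMulVec (fun k => darbouxFamily w c t a k z) fun k => darbouxFamily w c t a k z)
      z := by
  refine ((hasDerivAt_inv_darbouxMatrix hw hc hdet).fun_mul
    (hasDerivAt_gramMatrix hw hc a z)).congr_deriv ?_
  set R := darbouxMatrix w c t a z
  set G := gramMatrix w c a z
  set P := w z • vecMulVec (fun k => c k z) fun k => c k z with hP
  calc -(R⁻¹ * (P * diagonal t) * R⁻¹) * G + R⁻¹ * P
      = R⁻¹ * P * (1 - diagonal t * (R⁻¹ * G)) := by noncomm_ring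
    _ = R⁻¹ * P * (R⁻¹)ᵀ := by rw [one_sub_diagonal_mul_inv_mul_gramMatrix hdet]
    _ = w z • vecMulVec (R⁻¹ *ᵥ fun k => c k z) (R⁻¹ *ᵥ fun k => c k z) := by
      rw [hP, Matrix.mul_smul, Matrix.smul_mul, mul_vecMulVec, vecMulVec_mul, vecMul_transpose]

open scoped Matrix.Norms.Operator in
theorem continuousAt_darbouxFamily (hw : Continuous w) (hc : ∀ k, Continuous (c k)) {t : ι → ℝ}
    {a z : ℝ} (hdet : (darbouxMatrix w c t a z).det ≠ 0) (k : ι) :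
    ContinuousAt (darbouxFamily w c t a k) z := by
  have hinv := (hasDerivAt_inv_darbouxMatrix hw hc hdet).continuousAt
  exact tendsto_finsetSum _ fun l _ =>
    ((continuousAt_pi.1 (continuousAt_pi.1 hinv k)) l).mul (hc l).continuousAt

theorem integral_darbouxFamily_mul (hw : Continuous w) (hc : ∀ k, Continuous (c k)) {t : ι → ℝ}
    {a b : ℝ} (hdet : ∀ z ∈ Set.uIcc a b, (darbouxMatrix w c t a z).det ≠ 0) (j k : ι) :
    ∫ z in a..b, darbouxFamily w c t a j z * darbouxFamily w c t a k z * w z =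
      ((darbouxMatrix w c t a b)⁻¹ * gramMatrix w c a b) j k := by
  have hderiv : ∀ z ∈ Set.uIcc a b,
      HasDerivAt (fun z => ((darbouxMatrix w c t a z)⁻¹ * gramMatrix w c a z) j k)
        (darbouxFamily w c t a j z * darbouxFamily w c t a k z * w z) z := fun z hz => by
    have h := hasDerivAt_pi.1
      (hasDerivAt_pi.1 (hasDerivAt_inv_darbouxMatrix_mul_gramMatrix hw hc (hdet z hz)) j) k
    simpa [vecMulVec_apply, mul_comm] using h
  have hcont : ContinuousOn
      (fun z => darbouxFamily w c t a j z * darbouxFamily w c t a k z * w z) (Set.uIcc a b) :=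
    fun z hz => (((continuousAt_darbouxFamily hw hc (hdet z hz) j).mul
      (continuousAt_darbouxFamily hw hc (hdet z hz) k)).mul
        hw.continuousAt).continuousWithinAt
  rw [intervalIntegral.integral_eq_sub_of_hasDerivAt hderiv hcont.intervalIntegrable,
    gramMatrix_self, mul_zero, Matrix.zero_apply, sub_zero]

theorem integral_darbouxFamily_sq_mul {κ : Type*} [DecidableEq κ] (hw : Continuous w)
    (hc : ∀ k, Continuous (c k)) {t : ι → ℝ} {a b : ℝ} {μ : ι → κ} {ν : κ → ℝ}
    (horth : ∀ k l, gramMatrix w c a b k l = if μ k = μ l then ν (μ k) else 0)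
    (hdet : ∀ z ∈ Set.uIcc a b, (darbouxMatrix w c t a z).det ≠ 0) (k : ι) :
    (∫ z in a..b, darbouxFamily w c t a k z ^ 2 * w z) * (1 + (∑ l with μ l = μ k, t l) * ν (μ k)) =
      ν (μ k) := by
  simp only [sq, integral_darbouxFamily_mul hw hc hdet]
  exact inv_one_add_mul_diagonal_mul_apply_self_mul horth (hdet b Set.right_mem_uIcc).isUnit k

theorem darbouxMatrix_det_ne_zero (hw : Continuous w) (hc : ∀ k, Continuous (c k)) {t ν : ι → ℝ}
    {a b : ℝ} (hpos : ∀ u ∈ Set.Icc a b, 0 ≤ w u) (horth : gramMatrix w c a b = diagonal ν)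
    (hν : ∀ k, 0 < ν k) (ht : ∀ k, 0 < 1 + t k * ν k) {z : ℝ} (hz : z ∈ Set.Icc a b) :
    (darbouxMatrix w c t a z).det ≠ 0 := by
  refine det_one_add_mul_diagonal_ne_zero (d := ν) ?_ ?_ hν ht
  · exact posSemidef_gramMatrix hw hc hz.1 fun u hu => hpos u ⟨hu.1, hu.2.trans hz.2⟩
  · rw [← horth, gramMatrix_sub hw hc]
    exact posSemidef_gramMatrix hw hc hz.2 fun u hu => hpos u ⟨hz.1.trans hu.1, hu.2⟩

theorem darbouxMatrix_det_ne_zero_iff (hw : Continuous w) (hc : ∀ k, Continuous (c k))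
    {t ν : ι → ℝ} {a b : ℝ} (hab : a ≤ b) (hpos : ∀ u ∈ Set.Icc a b, 0 ≤ w u)
    (horth : gramMatrix w c a b = diagonal ν) (hν : ∀ k, 0 < ν k) :
    (∀ z ∈ Set.Icc a b, (darbouxMatrix w c t a z).det ≠ 0) ↔ ∀ k, 0 < 1 + t k * ν k := by
  refine ⟨fun hdet k => ?_, fun ht z hz => darbouxMatrix_det_ne_zero hw hc hpos horth hν ht hz⟩
  have hnorm := integral_darbouxFamily_sq_mul hw hc (a := a) (b := b) (t := t) (μ := id)
    (ν := ν) (fun k l => by simp [horth, diagonal_apply]) (by rwa [Set.uIcc_of_le hab]) k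
  have hnonneg : 0 ≤ ∫ z in a..b, darbouxFamily w c t a k z ^ 2 * w z :=
    intervalIntegral.integral_nonneg hab fun u hu => mul_nonneg (sq_nonneg _) (hpos u hu)
  have hprod : 0 < (∫ z in a..b, darbouxFamily w c t a k z ^ 2 * w z) * (1 + t k * ν k) := by
    simp only [id_eq, Finset.filter_eq', Finset.mem_univ, if_true, Finset.sum_singleton] at hnorm
    rw [hnorm]
    exact hν k
  exact pos_of_mul_pos_right hprod hnonneg

end ConfluentDarboux

section ClassicalGegenbauer

open Polynomial

theorem gegenbauer_operator_C_mul_X_pow {R : Type*} [CommRing R] (α s a : R) (p : ℕ) :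
    (1 - X ^ 2) * derivative (derivative (C a * X ^ p))
      - C (2 * α + 1) * X * derivative (C a * X ^ p) + C (s * (s + 2 * α)) * (C a * X ^ p) =
      C ((s - p) * (s + p + 2 * α) * a) * X ^ p + C (p * (p - 1) * a) * X ^ (p - 2) := by
  rcases p with _ | _ | p
  · simp
  · simp only [zero_add, pow_one, derivative_mul, derivative_C, zero_mul, derivative_X, mul_one,
      mul_zero, map_add, map_mul, map_one, zero_sub, Nat.cast_one, map_sub, sub_self, map_zero,
      Nat.one_le_ofNat, Nat.sub_eq_zero_of_le, pow_zero, add_zero]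
    ring
  · simp only [derivative_C_mul_X_pow, Nat.add_sub_cancel]
    simp only [map_mul, map_add, map_sub, map_natCast, map_one, map_ofNat]
    push_cast
    ring

/-- The coefficient of `z ^ (i - 2 * k)` in the Gegenbauer polynomial `C^{(α)}_i(z)`. -/
noncomputable def gegenCoeff (α : ℝ) (i k : ℕ) : ℝ :=
  (-1) ^ k * Real.Gamma (i - k + α) / (Real.Gamma α * k.factorial * (i - 2 * k).factorial) *
    2 ^ (i - 2 * k)

/-- The Gegenbauer polynomial `C^{(α)}_i` as an element of `ℝ[X]`. -/
noncomputable def gegenPoly (α : ℝ) (i : ℕ) : ℝ[X] :=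
  ∑ k ∈ Finset.range (i / 2 + 1), C (gegenCoeff α i k) * X ^ (i - 2 * k)

theorem eval_gegenPoly (α : ℝ) (i : ℕ) (z : ℝ) : (gegenPoly α i).eval z = gegenC α i z := by
  simp [gegenPoly, gegenCoeff, gegenC, eval_finsetSum, mul_pow, mul_assoc]

theorem continuous_gegenC (α : ℝ) (i : ℕ) : Continuous (gegenC α i) := by
  simp only [← funext (eval_gegenPoly α i)]
  exact (gegenPoly α i).continuous

theorem gegenPoly_zero {α : ℝ} (hα : 0 < α) : gegenPoly α 0 = 1 := by
  simp [gegenPoly, gegenCoeff, (Real.Gamma_pos_of_pos hα).ne']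

theorem gegenCoeff_succ {α : ℝ} (hα : 0 < α) {i k : ℕ} (hk : 2 * (k + 1) ≤ i) :
    4 * ((k : ℝ) + 1) * (i - (k + 1) + α) * gegenCoeff α i (k + 1) =
      -((i - 2 * k) * (i - 2 * k - 1) * gegenCoeff α i k) := by
  obtain ⟨p, rfl⟩ := Nat.exists_eq_add_of_le hk
  have hsub : 2 * (k + 1) + p - 2 * k = p + 2 := by omega
  have hΓ := (Real.Gamma_pos_of_pos hα).ne'
  have harg : ((2 * (k + 1) + p : ℕ) : ℝ) - k + α = (k + 1 + p + α) + 1 := by push_cast; ring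
  have harg' : ((2 * (k + 1) + p : ℕ) : ℝ) - (k + 1 : ℕ) + α = k + 1 + p + α := by
    push_cast; ring
  simp only [gegenCoeff, hsub, Nat.add_sub_cancel_left, harg, harg']
  rw [Real.Gamma_add_one (by positivity), Nat.factorial_succ k, Nat.factorial_succ (p + 1),
    Nat.factorial_succ p]
  push_cast
  field_simp
  ring

theorem mul_gegenCoeff_succ {α : ℝ} (hα : 0 < α) {i k : ℕ} (hk : 2 * k ≤ i) :
    gegenCoeff α (i + 1) k * (i + 1 - 2 * k) = 2 * α * gegenCoeff (α + 1) i k := by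
  obtain ⟨p, rfl⟩ := Nat.exists_eq_add_of_le hk
  have hsub : 2 * k + p + 1 - 2 * k = p + 1 := by omega
  have hΓ := (Real.Gamma_pos_of_pos hα).ne'
  have harg : ((2 * k + p + 1 : ℕ) : ℝ) - k + α = ((2 * k + p : ℕ) : ℝ) - k + (α + 1) := by
    push_cast; ring
  simp only [gegenCoeff, hsub, Nat.add_sub_cancel_left, harg]
  rw [Real.Gamma_add_one hα.ne', Nat.factorial_succ]
  push_cast
  field_simp
  ring

theorem derivative_gegenPoly {α : ℝ} (hα : 0 < α) (i : ℕ) :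
    derivative (gegenPoly α (i + 1)) = C (2 * α) * gegenPoly (α + 1) i := by
  have hsub : Finset.range (i / 2 + 1) ⊆ Finset.range ((i + 1) / 2 + 1) :=
    Finset.range_subset_range.2 (by omega)
  rw [gegenPoly, gegenPoly, derivative_sum, Finset.mul_sum, ← Finset.sum_subset hsub]
  · refine Finset.sum_congr rfl fun k hk => ?_
    have hk' : 2 * k ≤ i := by rw [Finset.mem_range] at hk; omega
    have hcast : ((i + 1 - 2 * k : ℕ) : ℝ) = i + 1 - 2 * k := by
      push_cast [Nat.cast_sub (show 2 * k ≤ i + 1 by omega)]; rfl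
    rw [derivative_C_mul_X_pow, hcast, mul_gegenCoeff_succ hα hk', C_mul, mul_assoc,
      show i + 1 - 2 * k - 1 = i - 2 * k by omega]
  · intro k hk hk'
    rw [Finset.mem_range] at hk hk'
    simp [show i + 1 - 2 * k = 0 by omega]

/- The images of consecutive terms of `gegenPoly` under the differential operator telescope. -/
theorem gegenPoly_ode {α : ℝ} (hα : 0 < α) (i : ℕ) :
    (1 - X ^ 2) * derivative (derivative (gegenPoly α i))
      - C (2 * α + 1) * X * derivative (gegenPoly α i)
      + C ((i : ℝ) * (i + 2 * α)) * gegenPoly α i = 0 := by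
  set same : ℕ → ℝ[X] := fun k =>
    C (4 * (k : ℝ) * (i - k + α) * gegenCoeff α i k) * X ^ (i - 2 * k)
  set lower : ℕ → ℝ[X] := fun k =>
    C (((i : ℝ) - 2 * k) * (i - 2 * k - 1) * gegenCoeff α i k) * X ^ (i - 2 * k - 2)
  have hcast : ∀ k ≤ i / 2, ((i - 2 * k : ℕ) : ℝ) = i - 2 * k := fun k hk => by
    push_cast [Nat.cast_sub (show 2 * k ≤ i by omega)]; rfl
  have hterm : ∀ k ∈ Finset.range (i / 2 + 1),
      (1 - X ^ 2) * derivative (derivative (C (gegenCoeff α i k) * X ^ (i - 2 * k)))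
        - C (2 * α + 1) * X * derivative (C (gegenCoeff α i k) * X ^ (i - 2 * k))
        + C ((i : ℝ) * (i + 2 * α)) * (C (gegenCoeff α i k) * X ^ (i - 2 * k)) =
      same k + lower k := fun k hk => by
    rw [gegenbauer_operator_C_mul_X_pow, hcast k (Finset.mem_range_succ_iff.1 hk)]
    congr 3
    ring
  have hsame_zero : same 0 = 0 := by simp [same]
  have hlower_last : lower (i / 2) = 0 := by
    have h : ((i - 2 * (i / 2) : ℕ) : ℝ) * ((i - 2 * (i / 2) : ℕ) - 1) = 0 := by
      rcases show i - 2 * (i / 2) = 0 ∨ i - 2 * (i / 2) = 1 by omega with h | h <;> simp [h]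
    rw [hcast _ le_rfl] at h
    simp only [lower, h, zero_mul, C_0]
  have hcancel : ∀ k ∈ Finset.range (i / 2), same (k + 1) + lower k = 0 := fun k hk => by
    have hk' : 2 * (k + 1) ≤ i := by rw [Finset.mem_range] at hk; omega
    simp only [same, lower, Nat.cast_add, Nat.cast_one, gegenCoeff_succ hα hk',
      show i - 2 * (k + 1) = i - 2 * k - 2 by omega]
    rw [← add_mul, ← C_add, neg_add_cancel, C_0, zero_mul]
  rw [gegenPoly, derivative_sum, derivative_sum, Finset.mul_sum, Finset.mul_sum, Finset.mul_sum,
    ← Finset.sum_sub_distrib, ← Finset.sum_add_distrib, Finset.sum_congr rfl hterm,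
    Finset.sum_add_distrib, Finset.sum_range_succ' same, Finset.sum_range_succ lower, hsame_zero,
    hlower_last, add_zero, add_zero, ← Finset.sum_add_distrib, Finset.sum_eq_zero hcancel]

theorem hasDerivAt_one_sub_sq_pow_mul_derivative_gegenPoly (ℓ i : ℕ) (z : ℝ) :
    HasDerivAt
      (fun z => (1 - z ^ 2) ^ (ℓ + 1) * (derivative (gegenPoly ((ℓ : ℝ) + 1 / 2) i)).eval z)
      (-(i * (i + 2 * ((ℓ : ℝ) + 1 / 2)) * (gegenPoly ((ℓ : ℝ) + 1 / 2) i).eval z *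
        (1 - z ^ 2) ^ ℓ)) z := by
  set p := gegenPoly ((ℓ : ℝ) + 1 / 2) i with hp
  have hweight : HasDerivAt (fun z : ℝ => (1 - z ^ 2) ^ (ℓ + 1))
      (((ℓ + 1 : ℕ) : ℝ) * (1 - z ^ 2) ^ ℓ * (-(2 * z))) z := by
    simpa using ((hasDerivAt_pow 2 z).const_sub 1).fun_pow (ℓ + 1)
  refine (hweight.fun_mul ((derivative p).hasDerivAt z)).congr_deriv ?_
  have hode := congrArg (eval z) (gegenPoly_ode (α := (ℓ : ℝ) + 1 / 2) (by positivity) i)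
  simp only [← hp, eval_add, eval_sub, eval_mul, eval_pow, eval_X, eval_C, eval_one,
    eval_zero] at hode
  push_cast
  linear_combination (1 - z ^ 2) ^ ℓ * hode

theorem integral_gegenPoly_mul (ℓ i : ℕ) (q : ℝ[X]) :
    (i : ℝ) * (i + 2 * ((ℓ : ℝ) + 1 / 2)) *
        ∫ u in (-1 : ℝ)..1, (gegenPoly ((ℓ : ℝ) + 1 / 2) i).eval u * q.eval u * (1 - u ^ 2) ^ ℓ =
      ∫ u in (-1 : ℝ)..1, (derivative (gegenPoly ((ℓ : ℝ) + 1 / 2) i)).eval u *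
        (derivative q).eval u * (1 - u ^ 2) ^ (ℓ + 1) := by
  have hparts := intervalIntegral.integral_mul_deriv_eq_deriv_mul (a := -1) (b := 1)
    (fun u _ => q.hasDerivAt u)
    (fun u _ => hasDerivAt_one_sub_sq_pow_mul_derivative_gegenPoly ℓ i u)
    (Continuous.intervalIntegrable (by fun_prop) _ _)
    (Continuous.intervalIntegrable (by fun_prop) _ _)
  simp only [mul_neg, intervalIntegral.integral_neg, neg_sq, one_pow, sub_self,
    zero_pow ℓ.succ_ne_zero, zero_mul, mul_zero, zero_sub, neg_inj] at hparts
  rw [← intervalIntegral.integral_const_mul]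
  calc ∫ u in (-1 : ℝ)..1, (i : ℝ) * (i + 2 * ((ℓ : ℝ) + 1 / 2)) *
        ((gegenPoly ((ℓ : ℝ) + 1 / 2) i).eval u * q.eval u * (1 - u ^ 2) ^ ℓ)
      = ∫ u in (-1 : ℝ)..1, q.eval u * (i * (i + 2 * ((ℓ : ℝ) + 1 / 2)) *
        (gegenPoly ((ℓ : ℝ) + 1 / 2) i).eval u * (1 - u ^ 2) ^ ℓ) := by congr! 2; ring
    _ = ∫ u in (-1 : ℝ)..1, (derivative q).eval u * ((1 - u ^ 2) ^ (ℓ + 1) *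
        (derivative (gegenPoly ((ℓ : ℝ) + 1 / 2) i)).eval u) := hparts
    _ = _ := by congr! 2; ring

theorem nuGegen_pos (ℓ i : ℕ) : 0 < nuGegen ℓ i := by
  exact div_pos
    (mul_pos (by positivity) (Real.Gamma_pos_of_pos (by positivity)))
    (mul_pos (by positivity) (pow_pos (Real.Gamma_pos_of_pos (by positivity)) 2))

theorem nuGegen_succ (ℓ i : ℕ) :
    ((i : ℝ) + 1) * (i + 1 + 2 * ((ℓ : ℝ) + 1 / 2)) * nuGegen ℓ (i + 1) =
      (2 * ((ℓ : ℝ) + 1 / 2)) ^ 2 * nuGegen (ℓ + 1) i := by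
  simp only [nuGegen, show ((ℓ + 1 : ℕ) : ℝ) + 1 / 2 = (ℓ + 1 / 2) + 1 by push_cast; ring]
  have hα : 0 < (ℓ : ℝ) + 1 / 2 := by positivity
  generalize (ℓ : ℝ) + 1 / 2 = α at *
  have hΓ := (Real.Gamma_pos_of_pos hα).ne'
  rw [show (i : ℝ) + 2 * (α + 1) = (i + 1 : ℕ) + 2 * α + 1 by push_cast; ring,
    show 1 - 2 * (α + 1) = 1 - 2 * α - (2 : ℕ) by push_cast; ring,
    Real.Gamma_add_one (by positivity), Real.Gamma_add_one hα.ne',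
    Real.rpow_sub_natCast (by norm_num), Nat.factorial_succ]
  push_cast
  rw [show (i : ℝ) + (α + 1) = i + 1 + α by ring]
  field_simp

theorem nuGegen_zero_zero : nuGegen 0 0 = 2 := by
  norm_num [nuGegen, Real.Gamma_one_half_eq, Real.sq_sqrt Real.pi_pos.le]
  field_simp

theorem nuGegen_succ_zero (ℓ : ℕ) :
    (2 * (ℓ : ℝ) + 3) * nuGegen (ℓ + 1) 0 = (2 * ℓ + 2) * nuGegen ℓ 0 := by
  simp only [nuGegen, show ((ℓ + 1 : ℕ) : ℝ) + 1 / 2 = (ℓ + 1 / 2) + 1 by push_cast; ring]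
  rw [show 2 * (ℓ : ℝ) + 3 = 2 * ((ℓ : ℝ) + 1 / 2) + 2 by ring,
    show 2 * (ℓ : ℝ) + 2 = 2 * ((ℓ : ℝ) + 1 / 2) + 1 by ring]
  have hα : 0 < (ℓ : ℝ) + 1 / 2 := by positivity
  generalize (ℓ : ℝ) + 1 / 2 = α at *
  have hΓ := (Real.Gamma_pos_of_pos hα).ne'
  rw [show ((0 : ℕ) : ℝ) + 2 * (α + 1) = 2 * α + 1 + 1 by push_cast; ring,
    show 1 - 2 * (α + 1) = 1 - 2 * α - (2 : ℕ) by push_cast; ring,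
    Real.Gamma_add_one (by positivity), Real.Gamma_add_one (by positivity),
    Real.Gamma_add_one hα.ne', Real.rpow_sub_natCast (by norm_num)]
  simp only [Nat.cast_zero, zero_add, Nat.factorial_zero, Nat.cast_one, one_mul]
  field_simp

theorem integral_one_sub_sq_pow_succ (ℓ : ℕ) :
    (2 * (ℓ : ℝ) + 3) * ∫ u in (-1 : ℝ)..1, (1 - u ^ 2) ^ (ℓ + 1) =
      (2 * ℓ + 2) * ∫ u in (-1 : ℝ)..1, (1 - u ^ 2) ^ ℓ := by
  have hderiv : ∀ u : ℝ, HasDerivAt (fun u => u * (1 - u ^ 2) ^ (ℓ + 1))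
      ((2 * (ℓ : ℝ) + 3) * (1 - u ^ 2) ^ (ℓ + 1) - (2 * ℓ + 2) * (1 - u ^ 2) ^ ℓ) u := fun u => by
    refine ((hasDerivAt_id u).fun_mul
      (((hasDerivAt_pow 2 u).const_sub 1).fun_pow (ℓ + 1))).congr_deriv ?_
    simp only [one_mul, id_eq, Nat.cast_add, Nat.cast_one, add_tsub_cancel_right, Nat.cast_ofNat,
      Nat.add_one_sub_one, pow_one, mul_neg]
    ring
  have hint := intervalIntegral.integral_eq_sub_of_hasDerivAt (a := (-1 : ℝ)) (b := 1)
    (fun u _ => hderiv u) (Continuous.intervalIntegrable (by fun_prop) _ _)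
  rw [intervalIntegral.integral_sub (Continuous.intervalIntegrable (by fun_prop) _ _)
    (Continuous.intervalIntegrable (by fun_prop) _ _), intervalIntegral.integral_const_mul,
    intervalIntegral.integral_const_mul] at hint
  simp only [neg_sq, one_pow, sub_self, zero_pow ℓ.succ_ne_zero, mul_zero] at hint
  exact sub_eq_zero.1 hint

theorem integral_one_sub_sq_pow_eq_nuGegen (ℓ : ℕ) :
    ∫ u in (-1 : ℝ)..1, (1 - u ^ 2) ^ ℓ = nuGegen ℓ 0 := by
  induction ℓ with
  | zero => norm_num [nuGegen_zero_zero]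
  | succ ℓ ih =>
    refine mul_left_cancel₀ (show 2 * (ℓ : ℝ) + 3 ≠ 0 by positivity) ?_
    rw [integral_one_sub_sq_pow_succ, ih, nuGegen_succ_zero]

theorem rhoGegen_eq_integral_eval (ℓ i j : ℕ) (z : ℝ) :
    rhoGegen ℓ i j z = ∫ u in (-1 : ℝ)..z, (gegenPoly ((ℓ : ℝ) + 1 / 2) i).eval u *
      (gegenPoly ((ℓ : ℝ) + 1 / 2) j).eval u * (1 - u ^ 2) ^ ℓ := by
  simp only [rhoGegen, eval_gegenPoly]

theorem rhoGegen_comm (ℓ i j : ℕ) (z : ℝ) : rhoGegen ℓ i j z = rhoGegen ℓ j i z := by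
  simp only [rhoGegen, mul_comm (gegenC _ i _)]

theorem rhoGegen_zero_zero_one (ℓ : ℕ) : rhoGegen ℓ 0 0 1 = nuGegen ℓ 0 := by
  simp only [rhoGegen_eq_integral_eval, gegenPoly_zero (show 0 < (ℓ : ℝ) + 1 / 2 by positivity),
    eval_one, one_mul, integral_one_sub_sq_pow_eq_nuGegen]

theorem rhoGegen_succ_zero_one (ℓ i : ℕ) : rhoGegen ℓ (i + 1) 0 1 = 0 := by
  have h := integral_gegenPoly_mul ℓ (i + 1) (gegenPoly ((ℓ : ℝ) + 1 / 2) 0)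
  rw [← rhoGegen_eq_integral_eval] at h
  simp only [gegenPoly_zero (show 0 < (ℓ : ℝ) + 1 / 2 by positivity), derivative_one,
    eval_zero, mul_zero, zero_mul, intervalIntegral.integral_zero] at h
  exact (mul_eq_zero.1 h).resolve_left (by positivity)

theorem rhoGegen_succ_succ_one (ℓ i j : ℕ) :
    ((i : ℝ) + 1) * (i + 1 + 2 * ((ℓ : ℝ) + 1 / 2)) * rhoGegen ℓ (i + 1) (j + 1) 1 =
      (2 * ((ℓ : ℝ) + 1 / 2)) ^ 2 * rhoGegen (ℓ + 1) i j 1 := by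
  have h := integral_gegenPoly_mul ℓ (i + 1) (gegenPoly ((ℓ : ℝ) + 1 / 2) (j + 1))
  simp only [← rhoGegen_eq_integral_eval, Nat.cast_add, Nat.cast_one,
    derivative_gegenPoly (show 0 < (ℓ : ℝ) + 1 / 2 by positivity), eval_mul, eval_C] at h
  rw [h, rhoGegen_eq_integral_eval, ← intervalIntegral.integral_const_mul,
    show ((ℓ + 1 : ℕ) : ℝ) + 1 / 2 = (ℓ : ℝ) + 1 / 2 + 1 by push_cast; ring]
  congr! 2
  ring

theorem rhoGegen_one (ℓ i j : ℕ) : rhoGegen ℓ i j 1 = if i = j then nuGegen ℓ i else 0 := by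
  induction i generalizing ℓ j with
  | zero =>
    cases j with
    | zero => rw [rhoGegen_zero_zero_one, if_pos rfl]
    | succ j => rw [rhoGegen_comm, rhoGegen_succ_zero_one, if_neg j.succ_ne_zero.symm]
  | succ i ih =>
    cases j with
    | zero => rw [rhoGegen_succ_zero_one, if_neg i.succ_ne_zero]
    | succ j =>
      refine mul_left_cancel₀
        (show ((i : ℝ) + 1) * (i + 1 + 2 * ((ℓ : ℝ) + 1 / 2)) ≠ 0 by positivity) ?_
      rw [rhoGegen_succ_succ_one, ih]
      simp only [Nat.succ_inj, mul_ite, mul_zero, nuGegen_succ]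

end ClassicalGegenbauer

section ExceptionalGegenbauer

open Matrix

/-- The Gegenbauer weight `(1-z²)^(α-1/2) = (1-z²)^ℓ`, for `α = ℓ + 1/2`. -/
def gegenWeight (ℓ : ℕ) (z : ℝ) : ℝ :=
  (1 - z ^ 2) ^ ℓ

/-- The family `C^{(α)}_{m₁}, …, C^{(α)}_{mₙ}`, for `α = ℓ + 1/2`; the degrees `m` are indexed from
`1` as in `rMat`. -/
noncomputable def gegenFamily (ℓ n : ℕ) (m : ℕ → ℕ) (k : Fin n) (z : ℝ) : ℝ :=
  gegenC ((ℓ : ℝ) + 1 / 2) (m (k.1 + 1)) z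

theorem continuous_gegenWeight (ℓ : ℕ) : Continuous (gegenWeight ℓ) := by
  unfold gegenWeight
  fun_prop

theorem gegenWeight_nonneg (ℓ : ℕ) {z : ℝ} (hz : z ∈ Set.Icc (-1 : ℝ) 1) : 0 ≤ gegenWeight ℓ z :=
  pow_nonneg (sub_nonneg.2 ((sq_le_one_iff_abs_le_one z).2 (abs_le.2 hz))) ℓ

theorem continuous_gegenFamily (ℓ n : ℕ) (m : ℕ → ℕ) (k : Fin n) :
    Continuous (gegenFamily ℓ n m k) :=
  continuous_gegenC _ _

theorem gramMatrix_gegenFamily_one (ℓ n : ℕ) (m : ℕ → ℕ) (k l : Fin n) :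
    gramMatrix (gegenWeight ℓ) (gegenFamily ℓ n m) (-1) 1 k l =
      if m (k.1 + 1) = m (l.1 + 1) then nuGegen ℓ (m (k.1 + 1)) else 0 :=
  rhoGegen_one ℓ _ _

theorem rMat_eq_darbouxMatrix (ℓ n : ℕ) (m : ℕ → ℕ) (t : ℕ → ℝ) (z : ℝ) :
    rMat ℓ n m t z = darbouxMatrix (gegenWeight ℓ) (gegenFamily ℓ n m)
      (fun k : Fin n => t (k.1 + 1)) (-1) z := by
  ext k l
  rw [darbouxMatrix, Matrix.add_apply, mul_diagonal, one_apply, mul_comm]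
  rfl

theorem tauMat_ne_zero_iff (ℓ n : ℕ) {m : ℕ → ℕ} (t : ℕ → ℝ)
    (hm : Function.Injective fun k : Fin n => m (k.1 + 1)) :
    (∀ z ∈ Set.Icc (-1 : ℝ) 1, tauMat ℓ n m t z ≠ 0) ↔
      ∀ k : Fin n, 0 < 1 + t (k.1 + 1) * nuGegen ℓ (m (k.1 + 1)) := by
  simp only [tauMat, rMat_eq_darbouxMatrix]
  refine darbouxMatrix_det_ne_zero_iff (continuous_gegenWeight ℓ) (continuous_gegenFamily ℓ n m)
    (by norm_num) (fun _ => gegenWeight_nonneg ℓ) ?_ (fun _ => nuGegen_pos ℓ _)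
  ext k l
  simp only [gramMatrix_gegenFamily_one, diagonal_apply, hm.eq_iff (a := k)]

/-- The parameters `(p₁, …, pₙ, x)` of the bordered matrix `R_{(m,i)}`, indexed from `1`. -/
def borderedSeq {β : Type*} (n : ℕ) (p : ℕ → β) (x : β) (a : ℕ) : β :=
  if a ≤ n then p a else x

theorem borderedSeq_castSucc {β : Type*} {n : ℕ} (p : ℕ → β) (x : β) (k : Fin n) :
    borderedSeq n p x (k.castSucc.1 + 1) = p (k.1 + 1) :=
  if_pos k.2

theorem borderedSeq_last {β : Type*} (n : ℕ) (p : ℕ → β) (x : β) :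
    borderedSeq n p x ((Fin.last n).1 + 1) = x :=
  if_neg n.lt_irrefl

theorem det_rMat_borderedSeq (ℓ n : ℕ) (m : ℕ → ℕ) (t : ℕ → ℝ) (i : ℕ) (z : ℝ) :
    (rMat ℓ (n + 1) (borderedSeq n m i) (borderedSeq n t 0) z).det = tauMat ℓ n m t z := by
  have hcol : ∀ k, rMat ℓ (n + 1) (borderedSeq n m i) (borderedSeq n t 0) z k (Fin.last n) =
      if k = Fin.last n then 1 else 0 := fun k => by
    rw [rMat, of_apply, borderedSeq_last n t, zero_mul, add_zero]
  rw [det_eq_mul_det_submatrix_castSucc fun k => by rw [hcol, if_neg k.castSucc_ne_last], hcol,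
    if_pos rfl, one_mul, tauMat]
  congr 1
  ext k l
  simp only [rMat, submatrix_apply, of_apply, borderedSeq_castSucc, Fin.castSucc_inj]

theorem xGegenC_div_tauMat (ℓ n : ℕ) (m : ℕ → ℕ) (t : ℕ → ℝ) (i : ℕ) (z : ℝ) :
    xGegenC ℓ n m t i z / tauMat ℓ n m t z =
      darbouxFamily (gegenWeight ℓ) (gegenFamily ℓ (n + 1) (borderedSeq n m i))
        (fun k : Fin (n + 1) => borderedSeq n t 0 (k.1 + 1)) (-1) (Fin.last n) z := by
  rw [darbouxFamily, ← rMat_eq_darbouxMatrix, inv_def, Ring.inverse_eq_inv', det_rMat_borderedSeq,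
    smul_mulVec, Pi.smul_apply, smul_eq_mul, ← div_eq_inv_mul]
  rfl

theorem integral_xGegenC_sq_mul (ℓ n : ℕ) (m : ℕ → ℕ) {t : ℕ → ℝ}
    (hτ : ∀ z ∈ Set.Icc (-1 : ℝ) 1, tauMat ℓ n m t z ≠ 0) (i : ℕ) :
    (∫ z in (-1 : ℝ)..1, xGegenC ℓ n m t i z ^ 2 * (1 - z ^ 2) ^ ℓ / tauMat ℓ n m t z ^ 2) *
      (1 + (∑ k : Fin n with m (k.1 + 1) = i, t (k.1 + 1)) * nuGegen ℓ i) = nuGegen ℓ i := by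
  have hintegrand : ∀ z, xGegenC ℓ n m t i z ^ 2 * (1 - z ^ 2) ^ ℓ / tauMat ℓ n m t z ^ 2 =
      (xGegenC ℓ n m t i z / tauMat ℓ n m t z) ^ 2 * gegenWeight ℓ z := fun z => by
    rw [gegenWeight, div_pow, div_mul_eq_mul_div]
  have hdet : ∀ z ∈ Set.uIcc (-1 : ℝ) 1, (darbouxMatrix (gegenWeight ℓ)
      (gegenFamily ℓ (n + 1) (borderedSeq n m i))
      (fun k : Fin (n + 1) => borderedSeq n t 0 (k.1 + 1)) (-1) z).det ≠ 0 := fun z hz => by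
    rw [← rMat_eq_darbouxMatrix, det_rMat_borderedSeq]
    exact hτ z (Set.uIcc_of_le (by norm_num : (-1 : ℝ) ≤ 1) ▸ hz)
  have hnorm := integral_darbouxFamily_sq_mul (continuous_gegenWeight ℓ)
    (continuous_gegenFamily ℓ (n + 1) (borderedSeq n m i))
    (gramMatrix_gegenFamily_one ℓ (n + 1) (borderedSeq n m i)) hdet (Fin.last n)
  simp only [← xGegenC_div_tauMat, ← hintegrand, Finset.sum_filter, Fin.sum_univ_castSucc,
    borderedSeq_castSucc, borderedSeq_last, ite_self, add_zero] at hnorm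
  rwa [← Finset.sum_filter] at hnorm

end ExceptionalGegenbauer

theorem neg_inv_lt_iff_one_add_mul_pos {𝕜 : Type*} [Field 𝕜] [LinearOrder 𝕜]
    [IsStrictOrderedRing 𝕜] {t ν : 𝕜} (hν : 0 < ν) : -ν⁻¹ < t ↔ 0 < 1 + t * ν := by
  rw [inv_eq_one_div, ← neg_div, div_lt_iff₀ hν, neg_lt_iff_pos_add']

theorem forall_mem_Icc_one_iff_forall_fin {n : ℕ} {P : ℕ → Prop} :
    (∀ j ∈ Finset.Icc 1 n, P j) ↔ ∀ k : Fin n, P (k.1 + 1) := by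
  refine ⟨fun h k => h _ (Finset.mem_Icc.2 ⟨by omega, k.2⟩), fun h j hj => ?_⟩
  obtain ⟨hj1, hjn⟩ := Finset.mem_Icc.1 hj
  simpa [Nat.sub_add_cancel hj1] using h ⟨j - 1, by omega⟩

/-- (1) `τ_m` is nonvanishing on `[-1,1]` iff `t_j > -ν_{m_j}⁻¹` for
all `j`; (2) under this condition, the exceptional Gegenbauer polynomials of the
second kind have squared norms `ν_i/(1 + δ_{i,m} t_{j(i)} ν_i)` with respect to the
exceptional weight `(1-z²)^ℓ/τ_m²`. -/
theorem statement18 (ℓ : ℕ) (n : ℕ) (hn : 1 ≤ n) (m : ℕ → ℕ) (t : ℕ → ℝ)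
    (hdist : ∀ j ∈ Finset.Icc 1 n, ∀ k ∈ Finset.Icc 1 n, j ≠ k → m j ≠ m k) :
    ((∀ z ∈ Set.Icc (-1 : ℝ) 1, tauMat ℓ n m t z ≠ 0)
      ↔ (∀ j ∈ Finset.Icc 1 n, t j > -(nuGegen ℓ (m j))⁻¹)) ∧
    ((∀ j ∈ Finset.Icc 1 n, t j > -(nuGegen ℓ (m j))⁻¹) →
      ∀ i : ℕ,
        ((∀ j ∈ Finset.Icc 1 n, m j ≠ i) →
          (∫ z in (-1 : ℝ)..1,
            (xGegenC ℓ n m t i z) ^ 2 * (1 - z ^ 2) ^ ℓ / (tauMat ℓ n m t z) ^ 2)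
            = nuGegen ℓ i) ∧
        (∀ j ∈ Finset.Icc 1 n, m j = i →
          (∫ z in (-1 : ℝ)..1,
            (xGegenC ℓ n m t i z) ^ 2 * (1 - z ^ 2) ^ ℓ / (tauMat ℓ n m t z) ^ 2)
            = nuGegen ℓ i / (1 + t j * nuGegen ℓ i))) := by
  have hm : Function.Injective fun k : Fin n => m (k.1 + 1) := fun k l hkl => by
    by_contra hne
    exact hdist _ (Finset.mem_Icc.2 ⟨by omega, k.2⟩) _ (Finset.mem_Icc.2 ⟨by omega, l.2⟩)
      (by omega) hkl
  have hτ : (∀ z ∈ Set.Icc (-1 : ℝ) 1, tauMat ℓ n m t z ≠ 0) ↔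
      ∀ j ∈ Finset.Icc 1 n, t j > -(nuGegen ℓ (m j))⁻¹ := by
    simp only [tauMat_ne_zero_iff ℓ n t hm, forall_mem_Icc_one_iff_forall_fin,
      gt_iff_lt, neg_inv_lt_iff_one_add_mul_pos (nuGegen_pos ℓ _)]
  refine ⟨hτ, fun ht i => ⟨fun hi => ?_, ?_⟩⟩
  · have hi' : ∀ k : Fin n, m (k.1 + 1) ≠ i := forall_mem_Icc_one_iff_forall_fin.1 hi
    simpa [hi'] using integral_xGegenC_sq_mul ℓ n m (hτ.2 ht) i
  · refine forall_mem_Icc_one_iff_forall_fin.2 fun k hk => ?_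
    subst hk
    have hpos := (tauMat_ne_zero_iff ℓ n t hm).1 (hτ.2 ht) k
    refine eq_div_of_mul_eq hpos.ne' ?_
    simpa [hm.eq_iff (b := k), Finset.filter_eq'] using
      integral_xGegenC_sq_mul ℓ n m (hτ.2 ht) (m (k.1 + 1))
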